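/- Fix 1 ≤ p < ∞ and 0 < η < 1. There exist constants C, D, C′, D′ > 0 (depending only on p) such that for all positive integers s ≤ N and m with m ≥ C·s·log(eN/s) + D·log(2η⁻¹), a random m × N matrix Φ with i.i.d. N(0,1) entries satisfies, with probability at least 1 − η, the following: for every x♮ ∈ ℝ^N, every ε ≥ 0, and every e ∈ ℝ^m with ‖e‖_{ℓp} ≤ ε, setting y = Φx♮ + e, every x⋆ ∈ ℝ^N that is a minimizer of ‖x‖_{ℓ1} subject to ‖Φx − y‖_{ℓp} ≤ ε (i.e., ‖Φx⋆ − y‖_{ℓp} ≤ ε and ‖x⋆‖_{ℓ1} ≤ ‖x‖_{ℓ1} for every x with ‖Φx − y‖_{ℓp} ≤ ε) satisfies ‖x⋆ − x♮‖_{ℓ2} ≤ (C′/√s)·σ_s(x♮)₁ + (D′/m^{1/p})·ε. -/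

import Mathlib

open MeasureTheory ProbabilityTheory Finset

/-- The ℓp norm of a vector in ℝ^m, for real `p`. -/
noncomputable def lpNorm {m : ℕ} (p : ℝ) (u : Fin m → ℝ) : ℝ :=
  (∑ i, |u i| ^ p) ^ (1 / p)

/-- The ℓ1 norm of a vector in ℝ^N. -/
noncomputable def l1Norm {N : ℕ} (v : Fin N → ℝ) : ℝ :=
  ∑ j, |v j|

/-- The ℓ2 norm of a vector in ℝ^N. -/
noncomputable def l2Norm {N : ℕ} (v : Fin N → ℝ) : ℝ :=
  Real.sqrt (∑ j, (v j) ^ 2)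

/-- The best s-term ℓ1-approximation error σ_s(x)₁. -/
noncomputable def bestApproxL1 {N : ℕ} (s : ℕ) (x : Fin N → ℝ) : ℝ :=
  ⨅ z : {z : Fin N → ℝ // {j | z j ≠ 0}.ncard ≤ s}, l1Norm (x - (z : Fin N → ℝ))

/-- The law of a standard Gaussian vector in ℝ^N (i.i.d. N(0,1) coordinates). -/
noncomputable def stdGaussianVec (N : ℕ) : Measure (Fin N → ℝ) :=
  Measure.pi fun _ => gaussianReal 0 1

/-- The law of an m × N standard Gaussian matrix (i.i.d. N(0,1) entries). -/
noncomputable def stdGaussianMatrix (m N : ℕ) : Measure (Fin m → Fin N → ℝ) :=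
  Measure.pi fun _ => stdGaussianVec N

/-!
A cone lower bound `‖A v‖₁ ≥ κ ‖v‖₂` for `‖v‖₁ ≤ 4 √s ‖v‖₂` implies recovery: if
`‖x'‖₁ ≤ ‖x‖₁`, then `x' - x` either satisfies `√s ‖x' - x‖₂ ≤ σ_s(x)₁` or lies in that cone, and
Hölder's inequality bounds `‖A (x' - x)‖₁` by `m ^ (1 - 1 / p) ‖A (x' - x)‖_p`.

For a Gaussian `A`, Chernoff's inequality gives `‖A z‖₁ ≥ c m ‖z‖₂` for a fixed `z` outside an event
of probability `exp (-c m)`. A union bound over the cone is replaced by one over the sums of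
`k = K s` signed basis vectors, which number only `exp (O (s log (e N / s)))`. Maurey's empirical
method approximates each `v` with `‖v‖₁ = k` by such a sum, with errors of order `√k` in `‖v - z‖₂`
and, because the columns of `A` have norm `O (√m)`, of order `√m √k` in `‖A (v - z)‖₂`. On the cone
`√k` is at most a small multiple of `‖v‖₂`, so both errors are absorbed.
-/

open Matrix

instance (N : ℕ) : IsProbabilityMeasure (stdGaussianVec N) := by
  unfold stdGaussianVec; infer_instance

instance (m N : ℕ) : IsProbabilityMeasure (stdGaussianMatrix m N) := by
  unfold stdGaussianMatrix; infer_instance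

section Norms

variable {m N s : ℕ}

lemma l1Norm_nonneg (v : Fin N → ℝ) : 0 ≤ l1Norm v :=
  sum_nonneg fun _ _ => abs_nonneg _

lemma l1Norm_eq_zero {v : Fin N → ℝ} : l1Norm v = 0 ↔ v = 0 := by
  simp [l1Norm, sum_eq_zero_iff_of_nonneg, funext_iff]

lemma l1Norm_add_le (v w : Fin N → ℝ) : l1Norm (v + w) ≤ l1Norm v + l1Norm w := by
  rw [l1Norm, l1Norm, l1Norm, ← sum_add_distrib]
  exact sum_le_sum fun j _ => abs_add_le (v j) (w j)

lemma l1Norm_smul (r : ℝ) (v : Fin N → ℝ) : l1Norm (r • v) = |r| * l1Norm v := by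
  simp only [l1Norm, Pi.smul_apply, smul_eq_mul, abs_mul, mul_sum]

lemma l2Norm_eq_norm (v : Fin N → ℝ) : l2Norm v = ‖WithLp.toLp 2 v‖ := by
  simp only [l2Norm, EuclideanSpace.norm_eq, Real.norm_eq_abs, sq_abs]

lemma l2Norm_nonneg (v : Fin N → ℝ) : 0 ≤ l2Norm v :=
  Real.sqrt_nonneg _

lemma sq_l2Norm (v : Fin N → ℝ) : l2Norm v ^ 2 = ∑ j, v j ^ 2 :=
  Real.sq_sqrt (sum_nonneg fun _ _ => sq_nonneg _)

lemma l2Norm_sub_rev (v w : Fin N → ℝ) : l2Norm (v - w) = l2Norm (w - v) := by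
  simp only [l2Norm_eq_norm, WithLp.toLp_sub, norm_sub_rev]

lemma l2Norm_add_le (v w : Fin N → ℝ) : l2Norm (v + w) ≤ l2Norm v + l2Norm w := by
  simp only [l2Norm_eq_norm, WithLp.toLp_add]
  exact norm_add_le _ _

lemma l2Norm_smul (r : ℝ) (v : Fin N → ℝ) : l2Norm (r • v) = |r| * l2Norm v := by
  simp only [l2Norm_eq_norm, WithLp.toLp_smul, norm_smul, Real.norm_eq_abs]

lemma l2Norm_single_one (j : Fin N) : l2Norm (Pi.single j 1) = 1 := by
  simp [l2Norm, Pi.single_apply]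

lemma sum_abs_le_sqrt_mul_l2Norm {S : Finset (Fin N)} (hS : #S ≤ s) (v : Fin N → ℝ) :
    ∑ j ∈ S, |v j| ≤ √s * l2Norm v := by
  rw [l2Norm, ← Real.sqrt_mul s.cast_nonneg]
  refine Real.le_sqrt_of_sq_le ?_
  calc (∑ j ∈ S, |v j|) ^ 2
      ≤ #S * ∑ j ∈ S, |v j| ^ 2 := sq_sum_le_card_mul_sum_sq
    _ ≤ s * ∑ j, v j ^ 2 := by
        simp only [sq_abs]
        gcongr
        exact S.subset_univ

lemma l1Norm_le_sqrt_mul_l2Norm (u : Fin m → ℝ) : l1Norm u ≤ √m * l2Norm u :=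
  sum_abs_le_sqrt_mul_l2Norm (by simp) u

lemma lpNorm_add_le {p : ℝ} (hp : 1 ≤ p) (u v : Fin m → ℝ) :
    lpNorm p (u + v) ≤ lpNorm p u + lpNorm p v :=
  Real.Lp_add_le univ u v hp

lemma l1Norm_le_rpow_mul_lpNorm {p : ℝ} (hp : 1 ≤ p) (u : Fin m → ℝ) :
    l1Norm u ≤ (m : ℝ) ^ (1 - 1 / p) * lpNorm p u := by
  have hp0 : 0 < p := by linarith
  have holder : l1Norm u ^ p ≤ (m : ℝ) ^ (p - 1) * ∑ i, |u i| ^ p := by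
    simpa [l1Norm] using Real.rpow_sum_le_const_mul_sum_rpow univ u hp
  calc l1Norm u = (l1Norm u ^ p) ^ (1 / p) := by
        rw [← Real.rpow_mul (l1Norm_nonneg u), mul_one_div_cancel hp0.ne', Real.rpow_one]
    _ ≤ ((m : ℝ) ^ (p - 1) * ∑ i, |u i| ^ p) ^ (1 / p) := by
        gcongr
        exact Real.rpow_nonneg (l1Norm_nonneg u) p
    _ = (m : ℝ) ^ (1 - 1 / p) * lpNorm p u := by
        rw [Real.mul_rpow (by positivity) (by positivity), ← Real.rpow_mul m.cast_nonneg,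
          sub_mul, mul_one_div_cancel hp0.ne', one_mul, _root_.lpNorm]

lemma bestApproxL1_nonneg (s : ℕ) (x : Fin N → ℝ) : 0 ≤ bestApproxL1 s x :=
  Real.iInf_nonneg fun _ => l1Norm_nonneg _

end Norms

section Recovery

variable {m N s : ℕ}

/-- A lower bound `κ ‖v‖₂ ≤ ‖A v‖₁` on the cone `‖v‖₁ ≤ 4 √s ‖v‖₂`, which contains every `s`-sparse
vector. It plays the role of a restricted isometry property; the aperture `4` is what the
recovery argument `HasConeLowerBound.l2Norm_sub_le` consumes. -/
def HasConeLowerBound (A : Matrix (Fin m) (Fin N) ℝ) (s : ℕ) (κ : ℝ) : Prop :=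
  ∀ v : Fin N → ℝ, l1Norm v ≤ 4 * √s * l2Norm v → κ * l2Norm v ≤ l1Norm (A *ᵥ v)

lemma l1Norm_sub_le_sum_add {x x' : Fin N → ℝ} (hx : l1Norm x' ≤ l1Norm x) {z : Fin N → ℝ}
    {S : Finset (Fin N)} (hz : ∀ j ∉ S, z j = 0) :
    l1Norm (x' - x) ≤ 2 * ∑ j ∈ S, |(x' - x) j| + 2 * l1Norm (x - z) := by
  have pointwise (j : Fin N) : |(x' - x) j| + |x j| - |x' j| ≤
      2 * (if j ∈ S then |(x' - x) j| else 0) + 2 * |(x - z) j| := by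
    simp only [Pi.sub_apply]
    split_ifs with hj
    · linarith [abs_sub_abs_le_abs_sub (x j) (x' j), abs_sub_comm (x j) (x' j),
        abs_nonneg (x j - z j)]
    · rw [hz j hj, sub_zero]
      linarith [abs_sub (x' j) (x j)]
  have summed := sum_le_sum fun j (_ : j ∈ univ) => pointwise j
  simp only [sum_sub_distrib, sum_add_distrib, ← mul_sum, sum_ite_mem, univ_inter] at summed
  simp only [l1Norm] at hx ⊢
  linarith

lemma l1Norm_sub_le_bestApproxL1 {x x' : Fin N → ℝ} (hx : l1Norm x' ≤ l1Norm x) (s : ℕ) :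
    l1Norm (x' - x) ≤ 2 * √s * l2Norm (x' - x) + 2 * bestApproxL1 s x := by
  have : Nonempty {z : Fin N → ℝ // {j | z j ≠ 0}.ncard ≤ s} := ⟨⟨0, by simp⟩⟩
  suffices (l1Norm (x' - x) - 2 * √s * l2Norm (x' - x)) / 2 ≤ bestApproxL1 s x by linarith
  refine le_ciInf fun ⟨z, hz⟩ => ?_
  have hcard : #{j | z j ≠ 0} ≤ s := by
    rwa [← Set.ncard_coe_finset, coe_filter_univ]
  have := l1Norm_sub_le_sum_add hx (z := z) (S := {j | z j ≠ 0}) (by simp)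
  linarith [sum_abs_le_sqrt_mul_l2Norm hcard (x' - x)]

theorem HasConeLowerBound.l2Norm_sub_le {A : Matrix (Fin m) (Fin N) ℝ} {κ : ℝ}
    (hA : HasConeLowerBound A s κ) (hκ : 0 < κ) (hs : 0 < s) {p : ℝ} (hp : 1 ≤ p)
    {x x' : Fin N → ℝ} (hx : l1Norm x' ≤ l1Norm x) :
    l2Norm (x' - x) ≤ 1 / √s * bestApproxL1 s x +
      (m : ℝ) ^ (1 - 1 / p) / κ * lpNorm p (A *ᵥ (x' - x)) := by
  have hs' : 0 < √(s : ℝ) := by positivity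
  have hσ := bestApproxL1_nonneg s x
  have hlp : 0 ≤ lpNorm p (A *ᵥ (x' - x)) := by unfold _root_.lpNorm; positivity
  rcases le_or_gt (√s * l2Norm (x' - x)) (bestApproxL1 s x) with small | large
  · refine le_add_of_le_of_nonneg ?_ (by positivity)
    rwa [one_div_mul_eq_div, le_div_iff₀' hs']
  · refine le_add_of_nonneg_of_le (by positivity) ?_
    rw [div_mul_eq_mul_div, le_div_iff₀' hκ]
    calc κ * l2Norm (x' - x) ≤ l1Norm (A *ᵥ (x' - x)) :=
          hA _ (by linarith [l1Norm_sub_le_bestApproxL1 hx s])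
      _ ≤ _ := l1Norm_le_rpow_mul_lpNorm hp _

lemma lpNorm_mulVec_sub_le {p : ℝ} (hp : 1 ≤ p) (A : Matrix (Fin m) (Fin N) ℝ)
    {x x' : Fin N → ℝ} {e : Fin m → ℝ} {ε : ℝ} (he : lpNorm p e ≤ ε)
    (hx' : lpNorm p (A *ᵥ x' - (A *ᵥ x + e)) ≤ ε) :
    lpNorm p (A *ᵥ (x' - x)) ≤ 2 * ε := by
  have : A *ᵥ (x' - x) = A *ᵥ x' - (A *ᵥ x + e) + e := by
    rw [mulVec_sub]; abel
  rw [this]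
  linarith [lpNorm_add_le hp (A *ᵥ x' - (A *ᵥ x + e)) e]

end Recovery

section Maurey

/-- Maurey's empirical method, derandomised: the summands are chosen greedily. If `err` is the
current error, the next summand `a i` satisfies `⟪err - x, a i⟫ ≤ ⟪err - x, x⟫`; such an `i` exists
because `x` lies in the convex hull. -/
theorem exists_sym_norm_sum_sub_smul_sq_le {ι E : Type*} [NormedAddCommGroup E]
    [InnerProductSpace ℝ E] {a : ι → E} {B : ℝ} (ha : ∀ i, ‖a i‖ ^ 2 ≤ B) {x : E}
    (hx : x ∈ convexHull ℝ (Set.range a)) (k : ℕ) :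
    ∃ t : Sym ι k, ‖((t : Multiset ι).map a).sum - (k : ℝ) • x‖ ^ 2 ≤ k * B := by
  induction k with
  | zero => exact ⟨Sym.nil, by simp⟩
  | succ k ih =>
    obtain ⟨t, ht⟩ := ih
    obtain ⟨err, herr⟩ : ∃ err, err = ((t : Multiset ι).map a).sum - (k : ℝ) • x := ⟨_, rfl⟩
    rw [← herr] at ht
    obtain ⟨_, ⟨i, rfl⟩, hi⟩ :=
      ((innerₛₗ ℝ (err - x)).concaveOn convex_univ).exists_le_of_mem_convexHull
        (Set.subset_univ _) hx
    simp only [innerₛₗ_apply_apply, inner_sub_left, real_inner_self_eq_norm_sq] at hi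
    refine ⟨i ::ₛ t, ?_⟩
    have step : (((i ::ₛ t : Sym ι (k + 1)) : Multiset ι).map a).sum - ((k + 1 : ℕ) : ℝ) • x =
        err + (a i - x) := by
      simp only [herr, Sym.coe_cons, Multiset.map_cons, Multiset.sum_cons, Nat.cast_add_one,
        add_smul, one_smul]
      abel
    rw [step, norm_add_sq_real, norm_sub_sq_real, inner_sub_right, real_inner_comm x (a i)]
    push_cast
    nlinarith [ha i, sq_nonneg ‖x‖]

variable {N k : ℕ}

/-- The vertices `e_j` and `-e_j` of the `ℓ1` unit ball of `ℝ^N`. -/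
def signedBasis : Fin N ⊕ Fin N → Fin N → ℝ :=
  Sum.elim (fun j => Pi.single j 1) (fun j => -Pi.single j 1)

/-- The sums of `k` vertices of the `ℓ1` unit ball of `ℝ^N`, repetitions allowed. By Maurey's
empirical method they form a net of the sphere `‖v‖₁ = k`. -/
noncomputable def maureyNet (N k : ℕ) : Finset (Fin N → ℝ) :=
  univ.image fun t : Sym (Fin N ⊕ Fin N) k => ((t : Multiset _).map signedBasis).sum

lemma mem_convexHull_range_signedBasis {v : Fin N → ℝ} (hv : l1Norm v = 1) :
    v ∈ convexHull ℝ (Set.range (signedBasis (N := N))) := by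
  let weight : Fin N ⊕ Fin N → ℝ := Sum.elim (fun j => (v j)⁺) (fun j => (v j)⁻)
  have hweight : ∑ i, weight i = 1 := by
    simp only [weight, Fintype.sum_sum_type, Sum.elim_inl, Sum.elim_inr, ← sum_add_distrib,
      posPart_add_negPart]
    exact hv
  have hcomb : ∑ i, weight i • signedBasis i = v := by
    simp only [weight, signedBasis, Fintype.sum_sum_type, Sum.elim_inl, Sum.elim_inr, smul_neg,
      ← sum_add_distrib, ← sub_eq_add_neg, ← sub_smul, posPart_sub_negPart]
    exact (pi_eq_sum_univ' v).symm
  rw [← hcomb]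
  refine (convex_convexHull ℝ _).sum_mem (fun i _ => ?_) hweight
    fun i _ => subset_convexHull ℝ _ (Set.mem_range_self i)
  rcases i with j | j
  exacts [posPart_nonneg _, negPart_nonneg _]

lemma exists_mem_maureyNet_norm_map_sub_sq_le {E : Type*} [NormedAddCommGroup E]
    [InnerProductSpace ℝ E] (T : (Fin N → ℝ) →ₗ[ℝ] E) {B : ℝ}
    (hT : ∀ j, ‖T (Pi.single j 1)‖ ^ 2 ≤ B) (hk : 0 < k) {v : Fin N → ℝ} (hv : l1Norm v = k) :
    ∃ z ∈ maureyNet N k, ‖T (z - v)‖ ^ 2 ≤ k * B := by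
  have hk' : (0 : ℝ) < k := by exact_mod_cast hk
  have hunit : l1Norm ((k : ℝ)⁻¹ • v) = 1 := by
    rw [l1Norm_smul, abs_of_pos (inv_pos.2 hk'), hv, inv_mul_cancel₀ hk'.ne']
  have hhull : T ((k : ℝ)⁻¹ • v) ∈ convexHull ℝ (Set.range (T ∘ signedBasis)) := by
    rw [Set.range_comp, ← T.image_convexHull]
    exact Set.mem_image_of_mem T (mem_convexHull_range_signedBasis hunit)
  have hvertex (i : Fin N ⊕ Fin N) : ‖(T ∘ signedBasis) i‖ ^ 2 ≤ B := by
    rcases i with j | j <;> simpa [signedBasis] using hT j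
  obtain ⟨t, ht⟩ := exists_sym_norm_sum_sub_smul_sq_le hvertex hhull k
  refine ⟨_, mem_image_of_mem _ (mem_univ t), ?_⟩
  rwa [map_smul, smul_inv_smul₀ hk'.ne', ← Multiset.map_map, ← map_multiset_sum, ← map_sub] at ht

end Maurey

section MaureyReduction

variable {m N k s : ℕ}

lemma exists_mem_maureyNet_l2Norm_sub_le (A : Matrix (Fin m) (Fin N) ℝ) {R : ℝ} (hR : 0 < R)
    (hcol : ∀ j, l2Norm (A.col j) ≤ R) (hk : 0 < k) {v : Fin N → ℝ} (hv : l1Norm v = k) :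
    ∃ z ∈ maureyNet N k, l2Norm (z - v) ≤ √(2 * k) ∧ l2Norm (A *ᵥ (z - v)) ≤ R * √(2 * k) := by
  let T : (Fin N → ℝ) →ₗ[ℝ] EuclideanSpace ℝ (Fin N ⊕ Fin m) :=
    (WithLp.linearEquiv 2 ℝ (Fin N ⊕ Fin m → ℝ)).symm.toLinearMap ∘ₗ
      (fromRows 1 (R⁻¹ • A)).mulVecLin
  have hT (w : Fin N → ℝ) : ‖T w‖ ^ 2 = l2Norm w ^ 2 + (R⁻¹ * l2Norm (A *ᵥ w)) ^ 2 := by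
    simp [T, EuclideanSpace.real_norm_sq_eq, fromRows_mulVec, mul_pow, smul_mulVec, sq_l2Norm,
      mul_sum]
  have hvertex (j : Fin N) : ‖T (Pi.single j 1)‖ ^ 2 ≤ 2 := by
    have hscaled : (R⁻¹ * l2Norm (A.col j)) ^ 2 ≤ 1 := by
      refine pow_le_one₀ (mul_nonneg (inv_nonneg.2 hR.le) (l2Norm_nonneg _)) ?_
      rw [inv_mul_le_one₀ hR]
      exact hcol j
    rw [hT, l2Norm_single_one, mulVec_single_one]
    linarith
  obtain ⟨z, hz, hzv⟩ := exists_mem_maureyNet_norm_map_sub_sq_le T hvertex hk hv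
  rw [hT, mul_comm] at hzv
  refine ⟨z, hz, Real.le_sqrt_of_sq_le ?_, ?_⟩
  · linarith [sq_nonneg (R⁻¹ * l2Norm (A *ᵥ (z - v)))]
  · rw [← inv_mul_le_iff₀ hR]
    exact Real.le_sqrt_of_sq_le (by linarith [sq_nonneg (l2Norm (z - v))])

lemma hasConeLowerBound_of_l1Norm_eq {A : Matrix (Fin m) (Fin N) ℝ} {κ r : ℝ} (hr : 0 < r)
    (h : ∀ v : Fin N → ℝ, l1Norm v = r → l1Norm v ≤ 4 * √s * l2Norm v →
      κ * l2Norm v ≤ l1Norm (A *ᵥ v)) :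
    HasConeLowerBound A s κ := by
  intro v hv
  rcases eq_or_ne v 0 with rfl | hv0
  · simp [l2Norm, l1Norm]
  have hpos : 0 < l1Norm v :=
    (l1Norm_nonneg v).lt_of_ne' (mt l1Norm_eq_zero.1 hv0)
  obtain ⟨t, ht, htr⟩ : ∃ t : ℝ, 0 < t ∧ t * l1Norm v = r :=
    ⟨r / l1Norm v, by positivity, div_mul_cancel₀ _ hpos.ne'⟩
  have scaled := h (t • v)
  simp only [l1Norm_smul, l2Norm_smul, mulVec_smul, abs_of_pos ht, mul_left_comm _ t] at scaled
  exact le_of_mul_le_mul_left (scaled htr (by gcongr)) ht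

theorem hasConeLowerBound_of_maureyNet {A : Matrix (Fin m) (Fin N) ℝ} {κ R : ℝ} (hκ : 0 < κ)
    (hR : 0 < R) (hcol : ∀ j, l2Norm (A.col j) ≤ R) (hk : 0 < k)
    (hnet : ∀ z ∈ maureyNet N k, κ * l2Norm z ≤ l1Norm (A *ᵥ z))
    (hsk : 128 * s * (κ + √m * R) ^ 2 ≤ κ ^ 2 * k) :
    HasConeLowerBound A s (κ / 2) := by
  have hk' : (0 : ℝ) < k := by exact_mod_cast hk
  refine hasConeLowerBound_of_l1Norm_eq hk' fun v hv hcone => ?_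
  obtain ⟨z, hz, hzv, hAzv⟩ := exists_mem_maureyNet_l2Norm_sub_le A hR hcol hk hv
  have hv_le : l2Norm v ≤ l2Norm z + √(2 * k) :=
    calc l2Norm v = l2Norm (z + (v - z)) := by rw [add_sub_cancel]
      _ ≤ l2Norm z + l2Norm (v - z) := l2Norm_add_le _ _
      _ ≤ l2Norm z + √(2 * k) := by rw [l2Norm_sub_rev]; gcongr
  have hAz_le : l1Norm (A *ᵥ z) ≤ l1Norm (A *ᵥ v) + √m * (R * √(2 * k)) :=
    calc l1Norm (A *ᵥ z) = l1Norm (A *ᵥ v + A *ᵥ (z - v)) := by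
          rw [← mulVec_add, add_sub_cancel]
      _ ≤ l1Norm (A *ᵥ v) + l1Norm (A *ᵥ (z - v)) := l1Norm_add_le _ _
      _ ≤ l1Norm (A *ᵥ v) + √m * (R * √(2 * k)) := by
          grw [l1Norm_le_sqrt_mul_l2Norm (A *ᵥ (z - v)), hAzv]
  have net_error : (κ + √m * R) * √(2 * k) ≤ κ / 2 * l2Norm v := by
    rw [hv] at hcone
    have hs : 0 < √(s : ℝ) := by
      by_contra! hs
      nlinarith [l2Norm_nonneg v]
    have hsqrt : 8 * √s * ((κ + √m * R) * √(2 * k)) ≤ κ * k := by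
      refine (abs_le_of_sq_le_sq' ?_ (by positivity)).2
      have hk2 : (0 : ℝ) ≤ 2 * k := by positivity
      simp only [mul_pow, Real.sq_sqrt s.cast_nonneg, Real.sq_sqrt hk2]
      linarith [mul_le_mul_of_nonneg_right hsk hk'.le]
    have := hsqrt.trans (mul_le_mul_of_nonneg_left hcone hκ.le)
    refine le_of_mul_le_mul_left ?_ hs
    linarith
  linarith [mul_le_mul_of_nonneg_left hv_le hκ.le, hnet z hz]

lemma card_maureyNet_le (hk : 0 < k) :
    (#(maureyNet N k) : ℝ) ≤ (Real.exp 1 * (k + 2 * N) / k) ^ k := by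
  have hcard : #(maureyNet N k) ≤ (2 * N + k - 1).choose k := by
    refine card_image_le.trans_eq ?_
    rw [card_univ, Sym.card_sym_eq_choose, Fintype.card_sum, Fintype.card_fin, two_mul]
  have hk' : (0 : ℝ) < k := by exact_mod_cast hk
  calc (#(maureyNet N k) : ℝ) ≤ ((2 * N + k - 1).choose k : ℕ) := by exact_mod_cast hcard
    _ ≤ ((2 * N + k - 1 : ℕ) : ℝ) ^ k / k.factorial := Nat.choose_le_pow_div k _
    _ ≤ (k + 2 * N : ℝ) ^ k / k.factorial := by
        gcongr
        exact_mod_cast (by omega : 2 * N + k - 1 ≤ k + 2 * N)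
    _ = ((k + 2 * N) / k : ℝ) ^ k * (k ^ k / k.factorial) := by
        rw [div_pow, mul_div_assoc', div_mul_cancel₀ _ (by positivity)]
    _ ≤ ((k + 2 * N) / k : ℝ) ^ k * Real.exp k := by
        gcongr
        exact Real.pow_div_factorial_le_exp _ hk'.le _
    _ = (Real.exp 1 * (k + 2 * N) / k) ^ k := by
        rw [← Real.exp_one_pow, ← mul_pow]; ring

lemma card_maureyNet_mul_le_exp {K : ℕ} (hs : 0 < s) (hsN : s ≤ N) (hK : 0 < K) :
    (#(maureyNet N (K * s)) : ℝ) ≤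
      Real.exp (3 * (K * s) * Real.log (Real.exp 1 * N / s)) := by
  have hs' : (0 : ℝ) < s := by exact_mod_cast hs
  have hsN' : (s : ℝ) ≤ N := by exact_mod_cast hsN
  have hK' : (1 : ℝ) ≤ K := by exact_mod_cast hK
  have he : (2 : ℝ) ≤ Real.exp 1 := by linarith [Real.add_one_le_exp (1 : ℝ)]
  obtain ⟨q, hq⟩ : ∃ q, q = Real.exp 1 * N / s := ⟨_, rfl⟩
  have hq2 : 2 ≤ q := by
    rw [hq, le_div_iff₀ hs']
    gcongr
  have hbase : Real.exp 1 * ((K * s : ℕ) + 2 * N) / (K * s : ℕ) ≤ q ^ 3 :=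
    calc Real.exp 1 * ((K * s : ℕ) + 2 * N) / (K * s : ℕ)
        = Real.exp 1 + 2 * q / K := by
          rw [hq]; push_cast; field_simp
      _ ≤ q + 2 * q := by
          gcongr
          · rw [hq, le_div_iff₀ hs']
            gcongr
          · exact div_le_self (by linarith) hK'
      _ ≤ q ^ 3 := by nlinarith [mul_nonneg (by linarith : 0 ≤ q) (by nlinarith : 0 ≤ q ^ 2 - 3)]
  rw [← hq]
  calc (#(maureyNet N (K * s)) : ℝ)
      ≤ (Real.exp 1 * ((K * s : ℕ) + 2 * N) / (K * s : ℕ)) ^ (K * s) :=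
        card_maureyNet_le (by positivity)
    _ ≤ (q ^ 3) ^ (K * s) := by gcongr
    _ = Real.exp (3 * (K * s) * Real.log q) := by
        rw [← pow_mul, mul_comm _ (Real.log q), Real.exp_mul, Real.exp_log (by linarith)]
        exact_mod_cast rfl

lemma log_le_mul_log_exp_one_mul_div (hs : 0 < s) (hsN : s ≤ N) :
    Real.log N ≤ s * Real.log (Real.exp 1 * N / s) := by
  have hs' : (1 : ℝ) ≤ s := by exact_mod_cast hs
  have hsN' : (s : ℝ) ≤ N := by exact_mod_cast hsN
  have hN : (0 : ℝ) < N := by linarith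
  have hlog : Real.log (Real.exp 1 * N / s) = 1 + Real.log N - Real.log s := by
    rw [Real.log_div (by positivity) (by positivity), Real.log_mul (by positivity) (by positivity),
      Real.log_exp]
  have hls : Real.log s ≤ s - 1 := Real.log_le_sub_one_of_pos (by linarith)
  have hlogs : Real.log s ≤ Real.log N := Real.log_le_log (by linarith) hsN'
  rw [hlog]
  nlinarith

end MaureyReduction

section Gaussian

variable {m N : ℕ}

lemma measureReal_pi_le_sum_le_exp {ι Ω : Type*} [Fintype ι] [MeasurableSpace Ω] {μ : Measure Ω}
    [IsProbabilityMeasure μ] {X : Ω → ℝ} (hX : Integrable (fun ω => Real.exp (X ω)) μ) (τ : ℝ) :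
    (Measure.pi fun _ : ι => μ).real {x | (cgf X μ 1 + τ) * Fintype.card ι ≤ ∑ i, X (x i)} ≤
      Real.exp (-(τ * Fintype.card ι)) := by
  have hexp (x : ι → Ω) : Real.exp (1 * ∑ i, X (x i)) = ∏ i, Real.exp (X (x i)) := by
    rw [one_mul, Real.exp_sum]
  have hint : Integrable (fun x : ι → Ω => Real.exp (1 * ∑ i, X (x i)))
      (Measure.pi fun _ => μ) := by
    simp only [hexp]
    exact Integrable.fintype_prod fun _ => hX
  have hmgf : mgf (fun x : ι → Ω => ∑ i, X (x i)) (Measure.pi fun _ => μ) 1 =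
      mgf X μ 1 ^ Fintype.card ι := by
    simp only [mgf, hexp]
    simp only [one_mul]
    exact integral_fintype_prod_eq_pow fun ω => Real.exp (X ω)
  refine (measure_ge_le_exp_mul_mgf _ zero_le_one hint).trans_eq ?_
  rw [hmgf, ← exp_cgf (by simpa using hX), ← Real.exp_nat_mul, ← Real.exp_add]
  ring_nf

lemma map_dotProduct_stdGaussianVec (u : Fin N → ℝ) :
    (stdGaussianVec N).map (· ⬝ᵥ u) = gaussianReal 0 (l2Norm u ^ 2).toNNReal := by
  let L : StrongDual ℝ (EuclideanSpace ℝ (Fin N)) := innerSL ℝ (WithLp.toLp 2 u)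
  have hL : (· ⬝ᵥ u) = L ∘ WithLp.toLp 2 := by
    ext x
    simp [L, EuclideanSpace.inner_eq_star_dotProduct]
  rw [hL, ← Measure.map_map (by fun_prop) (by fun_prop), stdGaussianVec, map_pi_eq_stdGaussian,
    IsGaussian.map_eq_gaussianReal, integral_strongDual_stdGaussian, variance_dual_stdGaussian,
    innerSL_apply_norm, l2Norm_eq_norm]

lemma measurePreserving_mulVec_stdGaussianMatrix {u : Fin N → ℝ} (hu : l2Norm u = 1) :
    MeasurePreserving (fun Φ => Matrix.of Φ *ᵥ u) (stdGaussianMatrix m N) (stdGaussianVec m) := by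
  have row : MeasurePreserving (· ⬝ᵥ u) (stdGaussianVec N) (gaussianReal 0 1) :=
    ⟨by fun_prop, by rw [map_dotProduct_stdGaussianVec, hu]; simp⟩
  exact measurePreserving_pi _ _ fun _ : Fin m => row

lemma integrable_exp_neg_abs (μ : Measure ℝ) [IsFiniteMeasure μ] :
    Integrable (fun x => Real.exp (-|x|)) μ :=
  .of_bound (by fun_prop) 1 (.of_forall fun x => by simp)

lemma cgf_neg_abs_lt_zero {μ : Measure ℝ} [IsProbabilityMeasure μ] (hμ : μ {0}ᶜ ≠ 0) :
    cgf (fun x => -|x|) μ 1 < 0 := by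
  have hint := integrable_exp_neg_abs μ
  have hsupport : Function.support (fun x : ℝ => 1 - Real.exp (-|x|)) = {0}ᶜ := by
    ext x
    simp [sub_eq_zero, eq_comm (a := (1 : ℝ))]
  have hpos : 0 < ∫ x, (1 - Real.exp (-|x|)) ∂μ := by
    refine (integral_pos_iff_support_of_nonneg (fun x => by simp)
      ((integrable_const 1).sub hint)).2 ?_
    exact pos_iff_ne_zero.2 (hsupport ▸ hμ)
  have hmgf : mgf (fun x => -|x|) μ 1 < 1 := by
    rw [integral_sub (integrable_const _) hint] at hpos
    simpa [mgf] using hpos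
  exact Real.log_neg (mgf_pos (by simpa using hint)) hmgf

theorem exists_measureReal_l1Norm_stdGaussianVec_lt_le_exp :
    ∃ c : ℝ, 0 < c ∧ ∀ m : ℕ,
      (stdGaussianVec m).real {g | l1Norm g < c * m} ≤ Real.exp (-(c * m)) := by
  have hcgf : cgf (fun x => -|x|) (gaussianReal 0 1) 1 < 0 := by
    refine cgf_neg_abs_lt_zero ?_
    rw [prob_compl_eq_one_sub (measurableSet_singleton _)]
    have := nullSingletonClass_gaussianReal (μ := 0) one_ne_zero
    simp
  refine ⟨-cgf (fun x => -|x|) (gaussianReal 0 1) 1 / 2, by linarith, fun m => ?_⟩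
  have := measureReal_pi_le_sum_le_exp (ι := Fin m) (integrable_exp_neg_abs (gaussianReal 0 1))
    (-cgf (fun x => -|x|) (gaussianReal 0 1) 1 / 2)
  rw [Fintype.card_fin] at this
  refine (measureReal_mono fun g hg => ?_).trans this
  simp only [Set.mem_ofPred_eq, l1Norm, sum_neg_distrib] at hg ⊢
  linarith

theorem exists_measureReal_le_l2Norm_stdGaussianVec_le_exp :
    ∃ β : ℝ, 0 < β ∧ ∀ m : ℕ,
      (stdGaussianVec m).real {g | β * √m ≤ l2Norm g} ≤ Real.exp (-m) := by
  obtain ⟨a, ha, hint⟩ := IsGaussian.exists_integrable_exp_sq (gaussianReal 0 1)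
  simp only [Real.norm_eq_abs, sq_abs] at hint
  obtain ⟨b, hb⟩ : ∃ b, b = cgf (fun x => a * x ^ 2) (gaussianReal 0 1) 1 := ⟨_, rfl⟩
  refine ⟨√((|b| + 1) / a), by positivity, fun m => ?_⟩
  have := measureReal_pi_le_sum_le_exp (ι := Fin m) hint 1
  rw [Fintype.card_fin, one_mul, ← hb] at this
  refine (measureReal_mono fun g hg => ?_).trans this
  simp only [Set.mem_ofPred_eq, l2Norm] at hg ⊢
  rw [← Real.sqrt_mul (by positivity), Real.sqrt_le_sqrt_iff (sum_nonneg fun _ _ => sq_nonneg _),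
    div_mul_eq_mul_div, div_le_iff₀' ha, mul_sum] at hg
  linarith [mul_le_mul_of_nonneg_right (le_abs_self b) m.cast_nonneg]

end Gaussian

section RandomMatrix

theorem exists_measureReal_l1Norm_mulVec_lt_le_exp :
    ∃ c : ℝ, 0 < c ∧ ∀ (m N : ℕ) (v : Fin N → ℝ),
      (stdGaussianMatrix m N).real {Φ | l1Norm (Matrix.of Φ *ᵥ v) < c * m * l2Norm v} ≤
        Real.exp (-(c * m)) := by
  obtain ⟨c, hc, hvec⟩ := exists_measureReal_l1Norm_stdGaussianVec_lt_le_exp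
  refine ⟨c, hc, fun m N v => ?_⟩
  rcases (l2Norm_nonneg v).eq_or_lt' with hv | hv
  · simp only [hv, mul_zero, (l1Norm_nonneg _).not_gt]
    simpa using Real.exp_nonneg _
  have hunit : l2Norm ((l2Norm v)⁻¹ • v) = 1 := by
    rw [l2Norm_smul, abs_of_pos (inv_pos.2 hv), inv_mul_cancel₀ hv.ne']
  have hevent (Φ : Fin m → Fin N → ℝ) : l1Norm (Matrix.of Φ *ᵥ v) < c * m * l2Norm v ↔
      l1Norm (Matrix.of Φ *ᵥ ((l2Norm v)⁻¹ • v)) < c * m := by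
    rw [mulVec_smul, l1Norm_smul, abs_of_pos (inv_pos.2 hv), inv_mul_lt_iff₀' hv]
  have hmeas : MeasurableSet {g : Fin m → ℝ | l1Norm g < c * m} :=
    measurableSet_lt (by unfold l1Norm; fun_prop) measurable_const
  simp only [hevent]
  exact ((measurePreserving_mulVec_stdGaussianMatrix hunit).measureReal_preimage
    hmeas.nullMeasurableSet).trans_le (hvec m)

theorem exists_measureReal_le_l2Norm_col_le_exp :
    ∃ β : ℝ, 0 < β ∧ ∀ (m N : ℕ) (j : Fin N),
      (stdGaussianMatrix m N).real {Φ | β * √m ≤ l2Norm ((Matrix.of Φ).col j)} ≤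
        Real.exp (-m) := by
  obtain ⟨β, hβ, hvec⟩ := exists_measureReal_le_l2Norm_stdGaussianVec_le_exp
  refine ⟨β, hβ, fun m N j => ?_⟩
  have hpres := measurePreserving_mulVec_stdGaussianMatrix (m := m) (l2Norm_single_one j)
  simp only [mulVec_single_one] at hpres
  have hmeas : MeasurableSet {g : Fin m → ℝ | β * √m ≤ l2Norm g} :=
    measurableSet_le measurable_const (by unfold l2Norm; fun_prop)
  exact (hpres.measureReal_preimage hmeas.nullMeasurableSet).trans_le (hvec m)

lemma measureReal_exists_mem_le_card_mul {ι Ω : Type*} [MeasurableSpace Ω] {μ : Measure Ω}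
    {t : Finset ι} {P : ι → Ω → Prop} {r : ℝ} (hP : ∀ i ∈ t, μ.real {ω | P i ω} ≤ r) :
    μ.real {ω | ∃ i ∈ t, P i ω} ≤ #t * r :=
  calc μ.real {ω | ∃ i ∈ t, P i ω} = μ.real (⋃ i ∈ t, {ω | P i ω}) := by
        congr 1; ext ω; simp
    _ ≤ ∑ i ∈ t, μ.real {ω | P i ω} := measureReal_biUnion_finset_le t _
    _ ≤ #t * r := by simpa only [nsmul_eq_mul] using sum_le_card_nsmul t _ r hP

lemma exp_mul_exp_neg_le_half {a b η : ℝ} (hη : 0 < η) (h : a + Real.log (2 * η⁻¹) ≤ b) :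
    Real.exp a * Real.exp (-b) ≤ η / 2 :=
  calc Real.exp a * Real.exp (-b) ≤ Real.exp (-Real.log (2 * η⁻¹)) := by
        rw [← Real.exp_add, Real.exp_le_exp]
        linarith
    _ = η / 2 := by
        rw [Real.exp_neg, Real.exp_log (by positivity), mul_inv, inv_inv, inv_mul_eq_div]

lemma hasConeLowerBound_of_maureyNet_mul {m N s K : ℕ} {A : Matrix (Fin m) (Fin N) ℝ} {c β : ℝ}
    (hm : 0 < m) (hs : 0 < s) (hK : 0 < K) (hc : 0 < c) (hβ : 0 < β)
    (hcK : 128 * (c + β) ^ 2 ≤ c ^ 2 * K) (hcol : ∀ j, l2Norm (A.col j) ≤ β * √m)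
    (hnet : ∀ z ∈ maureyNet N (K * s), c * m * l2Norm z ≤ l1Norm (A *ᵥ z)) :
    HasConeLowerBound A s (c / 2 * m) := by
  rw [div_mul_eq_mul_div]
  refine hasConeLowerBound_of_maureyNet (R := β * √m) (by positivity) (by positivity) hcol
    (by positivity) hnet ?_
  have hsqrt : √(m : ℝ) * (β * √m) = β * m := by
    rw [mul_left_comm, Real.mul_self_sqrt m.cast_nonneg]
  calc 128 * s * (c * m + √m * (β * √m)) ^ 2 = 128 * (c + β) ^ 2 * (s * m ^ 2) := by
        rw [hsqrt]; ring
    _ ≤ c ^ 2 * K * (s * m ^ 2) := by gcongr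
    _ = (c * m) ^ 2 * (K * s : ℕ) := by push_cast; ring

lemma one_sub_le_measureReal {Ω : Type*} [MeasurableSpace Ω] {μ : Measure Ω}
    [IsProbabilityMeasure μ] {G E F : Set Ω} {η : ℝ} (hG : ∀ ω ∉ E, ω ∉ F → ω ∈ G)
    (hE : μ.real E ≤ η / 2) (hF : μ.real F ≤ η / 2) : 1 - η ≤ μ.real G := by
  have hcover : Set.univ ⊆ G ∪ (E ∪ F) := by
    intro ω _
    have := hG ω
    simp only [Set.mem_union]
    tauto
  have := measureReal_mono (μ := μ) hcover
  rw [probReal_univ] at this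
  linarith [measureReal_union_le (μ := μ) G (E ∪ F), measureReal_union_le (μ := μ) E F]

lemma add_le_and_mul_add_le_mul {c K L ℓ M : ℝ} (hc : 0 < c) (hK : 0 ≤ K) (hL : 0 ≤ L)
    (hℓ : 0 ≤ ℓ) (hM : (1 + K / c) * L + (1 + 1 / c) * ℓ ≤ M) :
    L + ℓ ≤ M ∧ K * L + ℓ ≤ c * M := by
  have hKL : 0 ≤ K / c * L := by positivity
  have hℓc : 0 ≤ 1 / c * ℓ := by positivity
  refine ⟨by linarith, ?_⟩
  calc K * L + ℓ = c * (K / c * L + 1 / c * ℓ) := by field_simp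
    _ ≤ c * M := by gcongr; linarith

theorem exists_one_sub_le_measureReal_hasConeLowerBound :
    ∃ C D κ : ℝ, 0 < C ∧ 0 < D ∧ 0 < κ ∧ ∀ η : ℝ, 0 < η → η < 1 →
      ∀ s N m : ℕ, 0 < s → s ≤ N → 0 < m →
        C * s * Real.log (Real.exp 1 * N / s) + D * Real.log (2 * η⁻¹) ≤ m →
        1 - η ≤ (stdGaussianMatrix m N).real
          {Φ | HasConeLowerBound (Matrix.of Φ) s (κ * m)} := by
  obtain ⟨c, hc, hball⟩ := exists_measureReal_l1Norm_mulVec_lt_le_exp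
  obtain ⟨β, hβ, hcol⟩ := exists_measureReal_le_l2Norm_col_le_exp
  obtain ⟨K, hcK⟩ := exists_nat_gt (128 * (c + β) ^ 2 / c ^ 2)
  have hK : 0 < K := by
    exact_mod_cast (by positivity : 0 ≤ 128 * (c + β) ^ 2 / c ^ 2).trans_lt hcK
  rw [div_lt_iff₀' (by positivity)] at hcK
  refine ⟨1 + 3 * K / c, 1 + 1 / c, c / 2, by positivity, by positivity, by positivity,
    fun η hη hη1 s N m hs hsN hm hmeas => ?_⟩
  rw [mul_assoc _ (s : ℝ)] at hmeas
  have hη2 : 1 ≤ 2 * η⁻¹ := by linarith [(one_le_inv₀ hη).2 hη1.le]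
  have hlogN := log_le_mul_log_exp_one_mul_div hs hsN
  obtain ⟨hmN, hmK⟩ := add_le_and_mul_add_le_mul hc (by positivity : (0 : ℝ) ≤ 3 * K)
    ((Real.log_natCast_nonneg N).trans hlogN)
    (Real.log_nonneg hη2) hmeas
  have netBound : (stdGaussianMatrix m N).real {Φ | ∃ z ∈ maureyNet N (K * s),
      l1Norm (Matrix.of Φ *ᵥ z) < c * m * l2Norm z} ≤ η / 2 :=
    calc _ ≤ #(maureyNet N (K * s)) * Real.exp (-(c * m)) :=
          measureReal_exists_mem_le_card_mul fun z _ => hball m N z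
      _ ≤ Real.exp (3 * (K * s) * Real.log (Real.exp 1 * N / s)) * Real.exp (-(c * m)) := by
          gcongr
          exact card_maureyNet_mul_le_exp hs hsN hK
      _ ≤ η / 2 := exp_mul_exp_neg_le_half hη (by linarith)
  have colBound : (stdGaussianMatrix m N).real {Φ | ∃ j ∈ univ,
      β * √m ≤ l2Norm ((Matrix.of Φ).col j)} ≤ η / 2 :=
    have hN : (0 : ℝ) < N := by exact_mod_cast hs.trans_le hsN
    calc _ ≤ #(univ : Finset (Fin N)) * Real.exp (-m) :=
          measureReal_exists_mem_le_card_mul fun j _ => hcol m N j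
      _ = Real.exp (Real.log N) * Real.exp (-m) := by rw [Real.exp_log hN, card_fin]
      _ ≤ η / 2 := exp_mul_exp_neg_le_half hη (by linarith)
  refine one_sub_le_measureReal (fun Φ hnet hcols => ?_) netBound colBound
  simp only [Set.mem_ofPred_eq, not_exists, not_and, not_lt, not_le, mem_univ,
    forall_const] at hnet hcols
  exact hasConeLowerBound_of_maureyNet_mul hm hs hK hc hβ hcK.le (fun j => (hcols j).le) hnet

end RandomMatrix

lemma HasConeLowerBound.l2Norm_sub_le_of_noise {m N s : ℕ} {Φ : Fin m → Fin N → ℝ} {κ : ℝ}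
    (hΦ : HasConeLowerBound (Matrix.of Φ) s (κ * m)) (hκ : 0 < κ) (hs : 0 < s) (hm : 0 < m)
    {p : ℝ} (hp : 1 ≤ p) {x x' : Fin N → ℝ} {e : Fin m → ℝ} {ε : ℝ} (he : lpNorm p e ≤ ε)
    (hx' : lpNorm p (fun i => ∑ j, Φ i j * x' j - (∑ j, Φ i j * x j + e i)) ≤ ε)
    (hx : l1Norm x' ≤ l1Norm x) :
    l2Norm (x' - x) ≤ 1 / √s * bestApproxL1 s x + 2 / κ / (m : ℝ) ^ (1 / p) * ε := by
  have hm' : (0 : ℝ) < m := by exact_mod_cast hm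
  refine (hΦ.l2Norm_sub_le (by positivity) hs hp hx).trans (add_le_add_right ?_ _)
  calc (m : ℝ) ^ (1 - 1 / p) / (κ * m) * lpNorm p (Matrix.of Φ *ᵥ (x' - x))
      ≤ (m : ℝ) ^ (1 - 1 / p) / (κ * m) * (2 * ε) := by
        gcongr
        exact lpNorm_mulVec_sub_le hp _ he hx'
    _ = 2 / κ / (m : ℝ) ^ (1 / p) * ε := by
        rw [Real.rpow_sub hm', Real.rpow_one]
        field_simp

theorem gaussian_recovery_general :
    ∃ C D D' : ℝ, 0 < C ∧ 0 < D ∧ 0 < D' ∧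
      ∀ η : ℝ, 0 < η → η < 1 →
        ∀ (s N m : ℕ), 0 < s → s ≤ N → 0 < m →
          C * s * Real.log (Real.exp 1 * N / s) + D * Real.log (2 * η⁻¹) ≤ m →
          ENNReal.ofReal (1 - η) ≤
            stdGaussianMatrix m N
              {Φ : Fin m → Fin N → ℝ |
                ∀ p : ℝ, 1 ≤ p → ∀ (x : Fin N → ℝ) (ε : ℝ) (e : Fin m → ℝ), lpNorm p e ≤ ε →
                  ∀ x' : Fin N → ℝ,
                    lpNorm p (fun i => ∑ j, Φ i j * x' j - (∑ j, Φ i j * x j + e i)) ≤ ε →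
                    l1Norm x' ≤ l1Norm x →
                    l2Norm (x' - x) ≤
                      1 / √s * bestApproxL1 s x + D' / (m : ℝ) ^ (1 / p) * ε} := by
  obtain ⟨C, D, κ, hC, hD, hκ, hcone⟩ := exists_one_sub_le_measureReal_hasConeLowerBound
  refine ⟨C, D, 2 / κ, hC, hD, by positivity, fun η hη hη1 s N m hs hsN hm hmeas => ?_⟩
  refine ENNReal.ofReal_le_of_le_toReal ((hcone η hη hη1 s N m hs hsN hm hmeas).trans ?_)
  exact measureReal_mono fun Φ hΦ p hp x ε e he x' hx' hx =>
    HasConeLowerBound.l2Norm_sub_le_of_noise hΦ hκ hs hm hp he hx' hx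

/-- Corollary 1: stable and robust recovery for ℓp-constrained compressive sensing
with standard Gaussian matrices, with the optimal number of measurements
m ≳ s log(eN/s) + log(2η⁻¹). -/
theorem gaussian_recovery :
    ∀ p : ℝ, 1 ≤ p →
      ∃ C D C' D' : ℝ, 0 < C ∧ 0 < D ∧ 0 < C' ∧ 0 < D' ∧
        ∀ η : ℝ, 0 < η → η < 1 →
          ∀ (s N m : ℕ), 0 < s → s ≤ N → 0 < m →
            C * s * Real.log (Real.exp 1 * N / s) + D * Real.log (2 * η⁻¹) ≤ m →
            ENNReal.ofReal (1 - η) ≤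
              stdGaussianMatrix m N
                {Φ : Fin m → Fin N → ℝ |
                  ∀ (xnat : Fin N → ℝ) (ε : ℝ), 0 ≤ ε →
                    ∀ e : Fin m → ℝ, lpNorm p e ≤ ε →
                      ∀ xstar : Fin N → ℝ,
                        lpNorm p (fun i => (∑ j, Φ i j * xstar j) -
                          ((∑ j, Φ i j * xnat j) + e i)) ≤ ε →
                        (∀ x : Fin N → ℝ,
                          lpNorm p (fun i => (∑ j, Φ i j * x j) -
                            ((∑ j, Φ i j * xnat j) + e i)) ≤ ε →
                          l1Norm xstar ≤ l1Norm x) →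
                        l2Norm (xstar - xnat) ≤
                          (C' / Real.sqrt s) * bestApproxL1 s xnat +
                            (D' / (m : ℝ) ^ (1 / p)) * ε} := by
  intro p hp
  obtain ⟨C, D, D', hC, hD, hD', recovery⟩ := gaussian_recovery_general
  refine ⟨C, D, 1, D', hC, hD, one_pos, hD', fun η hη hη1 s N m hs hsN hm hmeas => ?_⟩
  refine (recovery η hη hη1 s N m hs hsN hm hmeas).trans (measure_mono ?_)
  intro Φ hΦ x ε _ e he x' hx' hmin
  exact hΦ p hp x ε e he x' hx' (hmin x (by simpa [_root_.lpNorm] using he))
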